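/- Let A = {a_1, …, a_n} be an (m,B)-positive multiset of integers. Set p_i = a_i + B for i = 1, …, n and q = 4B. Let G be obtained from the disjoint union K_{p_1} + … + K_{p_n} of complete graphs by adding a new vertex v adjacent to all other vertices, and let H be obtained from the disjoint union of m copies of K_q by adding a new vertex x adjacent to all other vertices (so G and H are connected cographs). Then A has a 3-partition if and only if there exists a surjective homomorphism from G to H. -/

import Mathlib

/-- The disjoint union of an indexed family of graphs, on the sigma type. -/
def disjointUnionGraph {ι : Type*} {F : ι → Type*} (Gs : ∀ i, SimpleGraph (F i)) :
    SimpleGraph (Σ i, F i) :=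
  SimpleGraph.fromRel
    (fun x y => ∃ (i : ι) (u v : F i), (Gs i).Adj u v ∧ x = ⟨i, u⟩ ∧ y = ⟨i, v⟩)

/-- The graph obtained from `G` by adding a new (apex) vertex adjacent to all other
vertices. The new vertex is `none`. -/
def addApex {V : Type*} (G : SimpleGraph V) : SimpleGraph (Option V) :=
  SimpleGraph.fromRel
    (fun x y => x = none ∨ ∃ u v, x = some u ∧ y = some v ∧ G.Adj u v)

/-- `a : Fin n → ℕ` (an `(m,B)`-positive multiset, given via the hypotheses `n = 3m`,
`∑ aᵢ = mB`, `aᵢ > 0`) has a 3-partition: the index set splits into `m` classes, each of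
size 3 and with elements summing to `B`. -/
def HasThreePartition (n m B : ℕ) (a : Fin n → ℕ) : Prop :=
  ∃ part : Fin n → Fin m, ∀ j : Fin m,
    (Finset.univ.filter (fun i => part i = j)).card = 3 ∧
    ∑ i ∈ Finset.univ.filter (fun i => part i = j), a i = B

theorem addApex_some_some {V : Type*} (G : SimpleGraph V) (u v : V) :
    (addApex G).Adj (some u) (some v) ↔ G.Adj u v := by
  simp only [addApex, SimpleGraph.fromRel_adj]
  constructor
  · rintro ⟨_, h⟩
    rcases h with (h | ⟨x, y, hx, hy, h⟩) | (h | ⟨x, y, hx, hy, h⟩)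
    · cases h
    · cases hx; cases hy; exact h
    · cases h
    · cases hx; cases hy; exact h.symm
  · intro h
    exact ⟨fun e => h.ne (Option.some.inj e), Or.inl (Or.inr ⟨u, v, rfl, rfl, h⟩)⟩

theorem addApex_none_some {V : Type*} (G : SimpleGraph V) (v : V) :
    (addApex G).Adj none (some v) := by
  simp [addApex, SimpleGraph.fromRel_adj]

theorem disjointUnion_top_adj {ι : Type*} {F : ι → Type*} (x y : Σ i, F i) :
    (disjointUnionGraph (fun i => (⊤ : SimpleGraph (F i)))).Adj x y ↔ x.1 = y.1 ∧ x ≠ y := by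
  simp only [disjointUnionGraph, SimpleGraph.fromRel_adj]
  constructor
  · rintro ⟨hne, h⟩
    refine ⟨?_, hne⟩
    rcases h with ⟨i, u, v, _, rfl, rfl⟩ | ⟨i, u, v, _, rfl, rfl⟩ <;> rfl
  · rintro ⟨h, hne⟩
    refine ⟨hne, Or.inl ?_⟩
    obtain ⟨i, u⟩ := x
    obtain ⟨j, v⟩ := y
    obtain rfl : i = j := h
    refine ⟨i, u, v, ?_, rfl, rfl⟩
    rw [SimpleGraph.top_adj]
    rintro rfl
    exact hne rfl

theorem card_fiber_sigma {n m : ℕ} (p : Fin n → ℕ) (part : Fin n → Fin m) (j : Fin m) :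
    (Finset.univ.filter (fun x : Σ i, Fin (p i) => part x.1 = j)).card
      = ∑ i ∈ Finset.univ.filter (fun i => part i = j), p i := by
  have : (Finset.univ.filter (fun x : Σ i, Fin (p i) => part x.1 = j))
      = (Finset.univ.filter (fun i => part i = j)).sigma (fun _ => Finset.univ) := by
    ext x; simp
  rw [this, Finset.card_sigma]
  simp

theorem forward_dir (n m B : ℕ) (a : Fin n → ℕ) (h : HasThreePartition n m B a) :
    ∃ f : addApex (disjointUnionGraph
              (fun i : Fin n => (⊤ : SimpleGraph (Fin (a i + B))))) →g
            addApex (disjointUnionGraph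
              (fun _ : Fin m => (⊤ : SimpleGraph (Fin (4 * B))))),
        Function.Surjective f := by
  obtain ⟨part, hp⟩ := h
  have he : ∀ j : Fin m,
      Nonempty ({x : Σ i, Fin (a i + B) // part x.1 = j} ≃ Fin (4 * B)) := by
    intro j
    refine ⟨Fintype.equivOfCardEq ?_⟩
    rw [Fintype.card_subtype, card_fiber_sigma (fun i => a i + B), Finset.sum_add_distrib,
      (hp j).2, Finset.sum_const, (hp j).1, Fintype.card_fin, smul_eq_mul]
    ring
  let e' := fun j => (he j).some
  let E : (Σ i, Fin (a i + B)) ≃ (Σ _ : Fin m, Fin (4 * B)) :=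
    (Equiv.sigmaFiberEquiv (fun x : Σ i, Fin (a i + B) => part x.1)).symm.trans
      (Equiv.sigmaCongrRight e')
  have hE : ∀ x, (E x).1 = part x.1 := fun x => rfl
  refine ⟨⟨Option.map E, ?_⟩, ?_⟩
  · intro x y hxy
    cases x with
    | none =>
      cases y with
      | none => exact absurd rfl hxy.ne
      | some y => exact addApex_none_some _ _
    | some x =>
      cases y with
      | none => exact (addApex_none_some _ _).symm
      | some y =>
        rw [addApex_some_some, disjointUnion_top_adj] at hxy
        refine (addApex_some_some _ _ _).2 ((disjointUnion_top_adj _ _).2 ⟨?_, ?_⟩)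
        · rw [hE, hE, hxy.1]
        · exact fun h => hxy.2 (E.injective h)
  · intro y
    cases y with
    | none => exact ⟨none, rfl⟩
    | some y => exact ⟨some (E.symm y), congrArg some (E.apply_symm_apply y)⟩

theorem backward_dir
    (n m B : ℕ) (a : Fin n → ℕ) (hn : n = 3 * m) (hsum : ∑ i, a i = m * B)
    (hpos : ∀ i, 0 < a i)
    (f : addApex (disjointUnionGraph
              (fun i : Fin n => (⊤ : SimpleGraph (Fin (a i + B))))) →g
            addApex (disjointUnionGraph
              (fun _ : Fin m => (⊤ : SimpleGraph (Fin (4 * B))))))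
    (hf : Function.Surjective f) : HasThreePartition n m B a := by
  by_cases hm : m ≤ 1
  · refine ⟨fun i => ⟨0, by have := i.2; omega⟩, fun j => ?_⟩
    have hm1 : m = 1 := by have := j.2; omega
    subst hm1
    have : (Finset.univ.filter (fun i : Fin n => (⟨0, by omega⟩ : Fin 1) = j))
        = Finset.univ := by
      apply Finset.filter_true_of_mem
      intro i _
      exact Subsingleton.elim _ _
    rw [this]
    refine ⟨by simp [hn], by simpa using hsum⟩
  have hbij : Function.Bijective f := by
    rw [Fintype.bijective_iff_surjective_and_card]
    refine ⟨hf, ?_⟩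
    simp only [Fintype.card_option, Fintype.card_sigma, Fintype.card_fin,
      Finset.sum_add_distrib, hsum, Finset.sum_const, Finset.card_univ, smul_eq_mul, hn]
    ring
  have hB : 0 < B := by
    rcases Nat.eq_zero_or_pos B with h | h
    · subst h
      have h0 : (0 : ℕ) < n := by omega
      have := Finset.single_le_sum (f := a) (fun i _ => Nat.zero_le _)
        (Finset.mem_univ (⟨0, h0⟩ : Fin n))
      have := hpos ⟨0, h0⟩
      omega
    · exact h
  have hnone : f none = none := by
    by_contra hne
    obtain ⟨⟨j, u⟩, hu⟩ := Option.ne_none_iff_exists'.1 hne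
    have : Nontrivial (Fin m) := Fin.nontrivial_iff_two_le.2 (by omega)
    obtain ⟨j', hj'⟩ := exists_ne j
    obtain ⟨z, hz⟩ := hf (some ⟨j', ⟨0, by omega⟩⟩)
    cases z with
    | none =>
      rw [hu] at hz
      exact hj' (congrArg Sigma.fst (Option.some.inj hz)).symm
    | some z =>
      have := f.map_adj (addApex_none_some _ z)
      rw [hu, hz, addApex_some_some, disjointUnion_top_adj] at this
      exact hj' this.1.symm
  have hex : ∀ x, ∃ y, f (some x) = some y := by
    intro x
    apply Option.ne_none_iff_exists'.1
    intro h
    exact Option.some_ne_none x (hbij.1 (h.trans hnone.symm))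
  choose g hg using hex
  have hginj : Function.Injective g := by
    intro x y h
    apply Option.some.inj
    apply hbij.1
    rw [hg, hg, h]
  have hgsurj : Function.Surjective g := by
    intro y
    obtain ⟨z, hz⟩ := hf (some y)
    cases z with
    | none => rw [hnone] at hz; cases hz
    | some z => exact ⟨z, Option.some.inj ((hg z).symm.trans hz)⟩
  let part : Fin n → Fin m := fun i => (g ⟨i, ⟨0, by omega⟩⟩).1
  have hpart : ∀ x, (g x).1 = part x.1 := by
    intro x
    by_cases hx : x = ⟨x.1, ⟨0, by omega⟩⟩
    · exact congrArg (fun z => (g z).1) hx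
    · have := f.map_adj ((addApex_some_some _ _ _).2 
        ((disjointUnion_top_adj x (⟨x.1, ⟨0, by omega⟩⟩ : Σ i, Fin (a i + B))).2 ⟨rfl, hx⟩))
      rw [hg, hg, addApex_some_some, disjointUnion_top_adj] at this
      exact this.1
  have hcount : ∀ j, ∑ i ∈ Finset.univ.filter (fun i => part i = j), (a i + B) = 4 * B := by
    intro j
    rw [← card_fiber_sigma (fun i => a i + B)]
    have h2 := card_fiber_sigma (fun _ : Fin m => 4 * B) id j
    have h3 : (Finset.univ.filter (fun i : Fin m => id i = j)) = {j} := by ext; simp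
    rw [h3, Finset.sum_singleton] at h2
    rw [← h2]
    refine Finset.card_bij (fun x _ => g x) ?_ (fun _ _ _ _ h => hginj h) ?_
    · intro x hx
      simpa [hpart] using hx
    · intro y hy
      obtain ⟨x, rfl⟩ := hgsurj y
      exact ⟨x, by simpa [hpart] using hy, rfl⟩
  have hle : ∀ j, (Finset.univ.filter (fun i => part i = j)).card ≤ 3 := by
    intro j
    by_contra hlt
    have h1 := hcount j
    rw [Finset.sum_add_distrib, Finset.sum_const, smul_eq_mul] at h1
    have h2 : 4 * B ≤ (Finset.univ.filter (fun i => part i = j)).card * B :=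
      Nat.mul_le_mul_right _ (by omega)
    have h3 : 0 < ∑ i ∈ Finset.univ.filter (fun i => part i = j), a i :=
      Finset.sum_pos (fun i _ => hpos i) (Finset.card_pos.1 (by omega))
    omega
  have htot : ∑ j, (Finset.univ.filter (fun i => part i = j)).card = ∑ _j : Fin m, 3 := by
    rw [← Finset.card_eq_sum_card_fiberwise (fun _ _ => Finset.mem_coe.2 (Finset.mem_univ _))]
    simp [hn, mul_comm]
  have heq := (Finset.sum_eq_sum_iff_of_le (fun j _ => hle j)).1 htot
  refine ⟨part, fun j => ⟨heq j (Finset.mem_univ _), ?_⟩⟩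
  have h1 := hcount j
  rw [Finset.sum_add_distrib, Finset.sum_const, smul_eq_mul, heq j (Finset.mem_univ _)] at h1
  omega

/-- Let `A = {a₁, …, a_n}` be an `(m,B)`-positive multiset. Set
`pᵢ = aᵢ + B` and `q = 4B`. Let `G` be obtained from `K_{p₁} + … + K_{p_n}` by adding a
new vertex adjacent to all other vertices, and let `H` be obtained from the disjoint
union of `m` copies of `K_q` by adding a new vertex adjacent to all other vertices.
Then `A` has a 3-partition if and only if there exists a surjective homomorphism from
`G` to `H`. -/
theorem threePartition_iff_surjective_hom_connected_cographs
    (n m B : ℕ) (a : Fin n → ℕ) (hn : n = 3 * m) (hsum : ∑ i, a i = m * B)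
    (hpos : ∀ i, 0 < a i) :
    HasThreePartition n m B a ↔
      ∃ f : addApex (disjointUnionGraph
              (fun i : Fin n => (⊤ : SimpleGraph (Fin (a i + B))))) →g
            addApex (disjointUnionGraph
              (fun _ : Fin m => (⊤ : SimpleGraph (Fin (4 * B))))),
        Function.Surjective f := by
  exact ⟨forward_dir n m B a, fun ⟨f, hf⟩ => backward_dir n m B a hn hsum hpos f hf⟩
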